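/- Let n ≥ 1 and let A be an n×n real symmetric matrix with zero diagonal. Then the order-4 cycle count statistic satisfies C_4 = trace(A^4) − 2·𝟙ₙᵀ(A∘A)²𝟙ₙ + 𝟙ₙᵀ(A∘A∘A∘A)𝟙ₙ, where the sum defining C_4 runs over pairwise distinct indices i₁,i₂,i₃,i₄ ∈ {1,…,n}. -/

import Mathlib

open Matrix

/-!
The weights `A i j * A j k * A k l * A l i` of the closed walks `i → j → k → l → i` sum to
`trace (A ^ 4)`. As the diagonal of `A` vanishes, a walk of nonzero weight visits four distinct
vertices unless `i = k` or `j = l`, so inclusion–exclusion over these two events isolates the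
4-cycles. The two events have equal total weight, because the weight is invariant under rotating
the walk; and a walk with `i = k` consists of two back-and-forth excursions from `i`, each weighted
by an entry of the symmetric matrix `A ⊙ Aᵀ`.
-/

theorem isSymm_hadamard_transpose_self {ι R : Type*} [CommMagma R] (A : Matrix ι ι R) :
    (A ⊙ Aᵀ).IsSymm :=
  IsSymm.ext fun _ _ ↦ mul_comm _ _

section ClosedWalks

variable {ι R : Type*}

/-- The weight of the closed walk `i → j → k → l → i` in the weighted digraph with adjacency
matrix `A`; the vertices need not be distinct. -/
def closedWalkWeight [Mul R] (A : Matrix ι ι R) (i j k l : ι) : R :=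
  A i j * A j k * A k l * A l i

theorem trace_pow_four_eq_sum_closedWalkWeight [Fintype ι] [DecidableEq ι] [Semiring R]
    (A : Matrix ι ι R) :
    (A ^ 4).trace = ∑ i, ∑ j, ∑ k, ∑ l, closedWalkWeight A i j k l := by
  have pow_four_right : A ^ 4 = A * (A * (A * A)) := by
    simp only [pow_succ, pow_zero, one_mul, mul_assoc]
  simp only [pow_four_right, trace, diag, mul_apply, Finset.mul_sum, closedWalkWeight, mul_assoc]

section CommSemigroup

variable [CommSemigroup R] (A : Matrix ι ι R)

theorem closedWalkWeight_rotate (i j k l : ι) :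
    closedWalkWeight A j k l i = closedWalkWeight A i j k l := by
  simp only [closedWalkWeight]
  ac_rfl

theorem closedWalkWeight_revisit (i j l : ι) :
    closedWalkWeight A i j i l = (A ⊙ Aᵀ) i j * (A ⊙ Aᵀ) i l := by
  simp only [closedWalkWeight, hadamard_apply, transpose_apply, mul_assoc]

end CommSemigroup

theorem closedWalkWeight_eq_zero_of_loop [MulZeroClass R] {A : Matrix ι ι R}
    (hA : ∀ i, A i i = 0) {i j k l : ι} (h : i = j ∨ j = k ∨ k = l ∨ l = i) :
    closedWalkWeight A i j k l = 0 := by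
  rcases h with rfl | rfl | rfl | rfl <;>
    simp only [closedWalkWeight, hA, mul_zero, zero_mul]

theorem ite_pairwise_ne_closedWalkWeight [DecidableEq ι] [NonUnitalNonAssocRing R]
    {A : Matrix ι ι R} (hA : ∀ i, A i i = 0) (i j k l : ι) :
    (if i ≠ j ∧ i ≠ k ∧ i ≠ l ∧ j ≠ k ∧ j ≠ l ∧ k ≠ l then closedWalkWeight A i j k l else 0)
      = closedWalkWeight A i j k l
        - (if i = k then closedWalkWeight A i j k l else 0)
        - (if j = l then closedWalkWeight A i j k l else 0)
        + (if i = k ∧ j = l then closedWalkWeight A i j k l else 0) := by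
  by_cases hloop : i = j ∨ j = k ∨ k = l ∨ l = i
  · simp only [closedWalkWeight_eq_zero_of_loop hA hloop, ite_self, sub_zero, add_zero]
  · obtain ⟨hij, hjk, hkl, hli⟩ : i ≠ j ∧ j ≠ k ∧ k ≠ l ∧ l ≠ i := by
      simpa only [not_or] using hloop
    by_cases hik : i = k <;> by_cases hjl : j = l <;>
      simp [hij, hjk, hkl, hli.symm, hik, hjl]

end ClosedWalks

section TotalWeights

variable {ι R : Type*} [Fintype ι]

theorem one_dotProduct_mulVec_one [NonAssocSemiring R] (B : Matrix ι ι R) :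
    1 ⬝ᵥ (B *ᵥ 1) = ∑ i, ∑ j, B i j := by
  simp only [one_dotProduct, mulVec, dotProduct_one]

variable [DecidableEq ι] [CommSemiring R]

theorem dotProduct_sq_mulVec_of_isSymm {B : Matrix ι ι R} (hB : B.IsSymm) (v : ι → R) :
    v ⬝ᵥ (B ^ 2 *ᵥ v) = (B *ᵥ v) ⬝ᵥ (B *ᵥ v) := by
  rw [sq, ← mulVec_mulVec, dotProduct_mulVec, ← mulVec_transpose, hB.eq]

variable (A : Matrix ι ι R)

theorem sum_closedWalkWeight_first_eq_third :
    ∑ i, ∑ j, ∑ k, ∑ l, (if i = k then closedWalkWeight A i j k l else 0)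
      = 1 ⬝ᵥ ((A ⊙ Aᵀ) ^ 2 *ᵥ 1) :=
  calc ∑ i, ∑ j, ∑ k, ∑ l, (if i = k then closedWalkWeight A i j k l else 0)
      = ∑ i, ∑ j, ∑ l, closedWalkWeight A i j i l := by
        simp only [Finset.sum_ite_irrel, Finset.sum_const_zero, Finset.sum_ite_eq,
          Finset.mem_univ, if_true]
    _ = ((A ⊙ Aᵀ) *ᵥ 1) ⬝ᵥ ((A ⊙ Aᵀ) *ᵥ 1) := by
        simp only [closedWalkWeight_revisit, ← Finset.sum_mul_sum, dotProduct, mulVec,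
          Pi.one_apply, mul_one]
    _ = 1 ⬝ᵥ ((A ⊙ Aᵀ) ^ 2 *ᵥ 1) :=
        (dotProduct_sq_mulVec_of_isSymm (isSymm_hadamard_transpose_self A) 1).symm

theorem sum_closedWalkWeight_second_eq_fourth :
    ∑ i, ∑ j, ∑ k, ∑ l, (if j = l then closedWalkWeight A i j k l else 0)
      = 1 ⬝ᵥ ((A ⊙ Aᵀ) ^ 2 *ᵥ 1) := by
  rw [← sum_closedWalkWeight_first_eq_third]
  -- Three exchanges move the sum over `i` innermost, the order of the rotated walk.
  rw [Finset.sum_comm]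
  refine Finset.sum_congr rfl fun j _ ↦ ?_
  rw [Finset.sum_comm]
  refine Finset.sum_congr rfl fun k _ ↦ ?_
  rw [Finset.sum_comm]
  simp only [closedWalkWeight_rotate A _ j k]

theorem sum_closedWalkWeight_first_eq_third_and_second_eq_fourth :
    ∑ i, ∑ j, ∑ k, ∑ l, (if i = k ∧ j = l then closedWalkWeight A i j k l else 0)
      = 1 ⬝ᵥ ((A ⊙ Aᵀ ⊙ A ⊙ Aᵀ) *ᵥ 1) := by
  simp only [ite_and, Finset.sum_ite_irrel, Finset.sum_const_zero, Finset.sum_ite_eq,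
    Finset.mem_univ, if_true, closedWalkWeight_revisit, one_dotProduct_mulVec_one, hadamard_apply,
    mul_assoc]

end TotalWeights

theorem cycle_count_four_formula_general {ι R : Type*} [Fintype ι] [DecidableEq ι] [CommRing R]
    (A : Matrix ι ι R) (hdiag : ∀ i, A i i = 0) :
    ∑ i₁, ∑ i₂, ∑ i₃, ∑ i₄,
      (if i₁ ≠ i₂ ∧ i₁ ≠ i₃ ∧ i₁ ≠ i₄ ∧ i₂ ≠ i₃ ∧ i₂ ≠ i₄ ∧ i₃ ≠ i₄
        then A i₁ i₂ * A i₂ i₃ * A i₃ i₄ * A i₄ i₁ else 0)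
      = (A ^ 4).trace
        - 2 * (1 ⬝ᵥ ((A ⊙ Aᵀ) ^ 2 *ᵥ 1))
        + 1 ⬝ᵥ ((A ⊙ Aᵀ ⊙ A ⊙ Aᵀ) *ᵥ 1) := by
  calc _ = ∑ i, ∑ j, ∑ k, ∑ l,
        (closedWalkWeight A i j k l
          - (if i = k then closedWalkWeight A i j k l else 0)
          - (if j = l then closedWalkWeight A i j k l else 0)
          + (if i = k ∧ j = l then closedWalkWeight A i j k l else 0)) := by
        simp only [← ite_pairwise_ne_closedWalkWeight hdiag]
        rfl
    _ = (A ^ 4).trace - 1 ⬝ᵥ ((A ⊙ Aᵀ) ^ 2 *ᵥ 1) - 1 ⬝ᵥ ((A ⊙ Aᵀ) ^ 2 *ᵥ 1)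
        + 1 ⬝ᵥ ((A ⊙ Aᵀ ⊙ A ⊙ Aᵀ) *ᵥ 1) := by
        simp only [Finset.sum_add_distrib, Finset.sum_sub_distrib,
          trace_pow_four_eq_sum_closedWalkWeight, sum_closedWalkWeight_first_eq_third,
          sum_closedWalkWeight_second_eq_fourth,
          sum_closedWalkWeight_first_eq_third_and_second_eq_fourth]
    _ = _ := by rw [two_mul, sub_sub]

/-- For an `n × n` real symmetric matrix `A` with zero diagonal (`n ≥ 1`), the order-4
cycle count statistic equals
`trace (A^4) - 2 ⬝ 𝟙ₙᵀ (A ∘ A)² 𝟙ₙ + 𝟙ₙᵀ (A ∘ A ∘ A ∘ A) 𝟙ₙ`. -/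
theorem cycle_count_four_formula
    (n : ℕ) (hn : 1 ≤ n) (A : Matrix (Fin n) (Fin n) ℝ)
    (hsym : A.IsSymm) (hdiag : ∀ i, A i i = 0) :
    ∑ i₁ : Fin n, ∑ i₂ : Fin n, ∑ i₃ : Fin n, ∑ i₄ : Fin n,
      (if i₁ ≠ i₂ ∧ i₁ ≠ i₃ ∧ i₁ ≠ i₄ ∧ i₂ ≠ i₃ ∧ i₂ ≠ i₄ ∧ i₃ ≠ i₄
        then A i₁ i₂ * A i₂ i₃ * A i₃ i₄ * A i₄ i₁ else 0)
      = (A ^ 4).trace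
        - 2 * ((1 : Fin n → ℝ) ⬝ᵥ (((A ⊙ A) ^ 2) *ᵥ (1 : Fin n → ℝ)))
        + ((1 : Fin n → ℝ) ⬝ᵥ ((A ⊙ A ⊙ A ⊙ A) *ᵥ (1 : Fin n → ℝ))) := by
  simpa only [hsym.eq] using cycle_count_four_formula_general A hdiag
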